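/- arXiv:2308.09374 — 4 statements merged into one kernel-verified Lean document; each statement's English description precedes it below -/
import Mathlib

section
/- Consider the fully connected sign network with i.i.d. standard normal weights: ω_0 = ω ∈ {-1,1}^n, ω_t = sign(θ_t ω_{t-1}) for t = 1,...,T_n, with θ_t independent n×n matrices of i.i.d. N(0,1) entries, and f_{n,T_n}(ω) = h_n(ω_{T_n}). If the (deterministic) sequence of Boolean functions {h_n} is noise stable and the depths T_n are bounded, then the random functions {f_{n,T_n}} are annealed (and hence quenched) noise stable. -/
open Finset Filter MeasureTheory ProbabilityTheory

noncomputable section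

/-- The ±1 real value of a Boolean bit. -/
def chi (b : Bool) : ℝ := if b then 1 else -1

/-- The joint probability of the pair `(ω, ω^ε)`, where `ω` is uniform on `{-1,1}^n` and
`ω^ε` flips each bit of `ω` independently with probability `ε`. -/
def pairWeight (n : ℕ) (ε : ℝ) (ω η : Fin n → Bool) : ℝ :=
  (1 / 2) ^ n * ∏ i, (if ω i = η i then 1 - ε else ε)

/-- Expectation of `g ω` for `ω` uniform on `{-1,1}^n`. -/
def unifMean (n : ℕ) (g : (Fin n → Bool) → ℝ) : ℝ := (∑ ω, g ω) / 2 ^ n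

/-- Expectation of `F ω ω^ε` over the correlated pair `(ω, ω^ε)`. -/
def pairMean (n : ℕ) (ε : ℝ) (F : (Fin n → Bool) → (Fin n → Bool) → ℝ) : ℝ :=
  ∑ ω, ∑ η, pairWeight n ε ω η * F ω η

/-- `Cov_{ω,ω^ε}(g(ω), g(ω^ε))` for a fixed real-valued function `g` on the cube. -/
def noiseCov (n : ℕ) (ε : ℝ) (g : (Fin n → Bool) → ℝ) : ℝ :=
  pairMean n ε (fun ω η => g ω * g η) - unifMean n g ^ 2

/-- `P_{ω,ω^ε}(f(ω) ≠ f(ω^ε))` for a fixed Boolean function `f`. -/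
def disagreeProb (n : ℕ) (ε : ℝ) (f : (Fin n → Bool) → Bool) : ℝ :=
  pairMean n ε (fun ω η => if f ω = f η then 0 else 1)

/-- The sign function with the convention `sgn z = 1` if `z > 0` and `-1` otherwise. -/
def sgn (x : ℝ) : ℝ := if 0 < x then 1 else -1

/-- One layer of the sign network: `x ↦ sign(θ x)`, coordinatewise. -/
def layerMap (n : ℕ) (θ : Fin n → Fin n → ℝ) (x : Fin n → ℝ) : Fin n → ℝ :=
  fun i => sgn (∑ j, θ i j * x j)

/-- The full network: `ω_T` obtained from `ω_0 = x` by `ω_t = sign(θ_t ω_{t-1})`. -/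
def network (n T : ℕ) (Θ : Fin T → Fin n → Fin n → ℝ) (x : Fin n → ℝ) : Fin n → ℝ :=
  (List.ofFn Θ).foldl (fun y θ => layerMap n θ y) x

/-- The Boolean output `f_{n,T}(ω) = h(ω_T)` of the network. -/
def boolOut (n T : ℕ) (h : (Fin n → Bool) → Bool) (Θ : Fin T → Fin n → Fin n → ℝ)
    (ω : Fin n → Bool) : Bool :=
  h fun i => decide (0 < network n T Θ (fun j => chi (ω j)) i)

/-- The ±1-valued output of the network. -/
def netOut (n T : ℕ) (h : (Fin n → Bool) → Bool) (Θ : Fin T → Fin n → Fin n → ℝ)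
    (ω : Fin n → Bool) : ℝ :=
  chi (boolOut n T h Θ ω)

/-- The law of the i.i.d. standard normal weights `Θ = (θ_1, ..., θ_T)`. -/
def weightMeas (n T : ℕ) : Measure (Fin T → Fin n → Fin n → ℝ) :=
  Measure.pi fun _ => Measure.pi fun _ => Measure.pi fun _ => gaussianReal 0 1

/-- The annealed covariance `Cov_{Θ,ω,ω^ε}(f_{n,T}(ω), f_{n,T}(ω^ε))`. -/
def annealedCov (n T : ℕ) (ε : ℝ) (h : (Fin n → Bool) → Bool) : ℝ :=
  (∫ Θ, pairMean n ε (fun ω η => netOut n T h Θ ω * netOut n T h Θ η) ∂weightMeas n T)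
    - (∫ Θ, unifMean n (netOut n T h Θ) ∂weightMeas n T) ^ 2

/-!
A random Gaussian layer maps any two inputs `ω`, `η` to a uniform point of the cube and its noisy
copy: the output bits are independent over the rows, uniform by the symmetry `v ↦ -v`, and differ
with one and the same probability `p(ω, η)`. Hence the annealed disagreement probability at depth
`T + 1` and noise `ε` is the mean, over `(ω, ω^ε)`, of the one at depth `T` and noise `p(ω, ω^ε)`.
The inputs are separated only if `v ⬝ᵥ ω` is small or `v ⬝ᵥ (ω - ω^ε)` is large, so the mean of
`p(ω, ω^ε)` is at most `s + 4 ε / s ^ 2` for every `s > 0`, uniformly in `n`, and noise stability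
passes from each depth to the next. Markov's inequality turns annealed into quenched stability.
-/

open scoped Topology Matrix

section Probability

variable {Ω : Type*} [MeasurableSpace Ω] {μ : Measure Ω}

lemma integrable_comp_of_finite {α E : Type*} [Finite α] [MeasurableSpace α]
    [MeasurableSingletonClass α] [NormedAddCommGroup E] [IsFiniteMeasure μ] {X : Ω → α}
    (hX : Measurable X) (f : α → E) : Integrable (fun x => f (X x)) μ :=
  (Integrable.of_finite (μ := μ.map X) (f := f)).comp_measurable hX

lemma ofReal_one_sub_le_measure_lt_of_integral_le_sq [IsProbabilityMeasure μ] {g : Ω → ℝ}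
    (hg : 0 ≤ᵐ[μ] g) (hgi : Integrable g μ) {δ : ℝ} (hδ : 0 < δ) (hint : ∫ x, g x ∂μ ≤ δ ^ 2) :
    ENNReal.ofReal (1 - δ) ≤ μ {x | g x < δ} := by
  have markov : μ.real {x | δ ≤ g x} ≤ δ := by
    refine le_of_mul_le_mul_left ?_ hδ
    calc δ * μ.real {x | δ ≤ g x} ≤ ∫ x, g x ∂μ := mul_meas_ge_le_integral_of_nonneg hg hgi δ
      _ ≤ δ * δ := by rwa [← sq]
  have cover : 1 ≤ μ.real {x | g x < δ} + μ.real {x | δ ≤ g x} := by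
    calc 1 = μ.real ({x | g x < δ} ∪ {x | δ ≤ g x}) := by
          rw [← probReal_univ (μ := μ)]
          congr 1
          ext x
          simpa using (lt_or_ge (g x) δ)
      _ ≤ _ := measureReal_union_le _ _
  exact ENNReal.ofReal_le_of_le_toReal (by change _ ≤ μ.real _; linarith)

lemma integral_pi_fin_succ {α E : Type*} [MeasurableSpace α] {μ : Measure α} [SigmaFinite μ]
    [NormedAddCommGroup E] [NormedSpace ℝ E] {T : ℕ} {F : (Fin (T + 1) → α) → E}
    (hF : Integrable F (Measure.pi fun _ => μ)) :
    ∫ x, F x ∂(Measure.pi fun _ => μ) =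
      ∫ x, ∫ a, F (Fin.cons a x) ∂μ ∂(Measure.pi fun _ => μ) := by
  have hmp := (measurePreserving_piFinSuccAbove (fun _ : Fin (T + 1) => μ) 0).symm
  rw [← hmp.integral_comp', integral_prod_symm]
  · simp only [MeasurableEquiv.piFinSuccAbove_symm_apply, Fin.insertNthEquiv, Fin.insertNth_zero]
    rfl
  · exact hmp.integrable_comp_of_integrable hF

end Probability

section GaussianRow

lemma gaussianPDFReal_le (m : ℝ) (v : NNReal) (x : ℝ) :
    gaussianPDFReal m v x ≤ (√(2 * Real.pi * v))⁻¹ := by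
  rw [gaussianPDFReal]
  refine mul_le_of_le_one_right (by positivity) (Real.exp_le_one_iff.2 ?_)
  exact div_nonpos_of_nonpos_of_nonneg (neg_nonpos.2 (sq_nonneg _)) (by positivity)

lemma gaussianReal_real_le (m : ℝ) {v : NNReal} (hv : v ≠ 0) {s : Set ℝ} (hs : volume s ≠ ⊤) :
    (gaussianReal m v).real s ≤ (√(2 * Real.pi * v))⁻¹ * volume.real s := by
  rw [measureReal_def, gaussianReal_apply_eq_integral m hv, ENNReal.toReal_ofReal
    (integral_nonneg (gaussianPDFReal_nonneg m v)), mul_comm, ← smul_eq_mul, ← setIntegral_const]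
  exact setIntegral_mono (integrable_gaussianPDFReal m v).integrableOn
    (integrableOn_const hs) (gaussianPDFReal_le m v)

lemma gaussianReal_real_abs_le {v : NNReal} (hv : v ≠ 0) {r : ℝ} (hr : 0 ≤ r) :
    (gaussianReal 0 v).real {t | |t| ≤ r} ≤ r / √v := by
  have hpi : 2 * √v ≤ √(2 * Real.pi * v) := by
    refine Real.le_sqrt_of_sq_le ?_
    rw [mul_pow, Real.sq_sqrt v.coe_nonneg]
    nlinarith [Real.pi_gt_three, v.coe_nonneg]
  have hball : {t : ℝ | |t| ≤ r} = Set.Icc (-r) r := by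
    ext t
    simp [abs_le]
  calc (gaussianReal 0 v).real {t | |t| ≤ r}
      ≤ (√(2 * Real.pi * v))⁻¹ * volume.real (Set.Icc (-r) r) := by
        rw [hball]
        exact gaussianReal_real_le 0 hv (by simp)
    _ = (√(2 * Real.pi * v))⁻¹ * (2 * r) := by
        rw [Real.volume_real_Icc_of_le (by linarith)]
        ring
    _ ≤ (2 * √v)⁻¹ * (2 * r) := by gcongr
    _ = r / √v := by field_simp

lemma gaussianReal_real_le_abs (v : NNReal) {r : ℝ} (hr : 0 < r) :
    (gaussianReal 0 v).real {t | r ≤ |t|} ≤ v / r ^ 2 := by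
  have chebyshev := meas_ge_le_variance_div_sq (memLp_id_gaussianReal (μ := 0) (v := v) 2) hr
  simp only [id_eq, integral_id_gaussianReal, variance_id_gaussianReal, sub_zero] at chebyshev
  exact ENNReal.toReal_le_of_le_ofReal (by positivity) chebyshev

variable {ι : Type*} [Fintype ι]

variable (ι) in
/-- The law of a vector of i.i.d. standard normal variables, i.e. of one row of a weight matrix.
Unlike Mathlib's `stdGaussian` it lives on the plain function space `ι → ℝ`. -/
abbrev rowMeas : Measure (ι → ℝ) := Measure.pi fun _ => gaussianReal 0 1

lemma map_dotProduct_rowMeas (x : ι → ℝ) :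
    (rowMeas ι).map (fun v => v ⬝ᵥ x) = gaussianReal 0 (x ⬝ᵥ x).toNNReal := by
  let L : StrongDual ℝ (EuclideanSpace ℝ ι) := innerSL ℝ (WithLp.toLp 2 x)
  have hL : (fun v : ι → ℝ => v ⬝ᵥ x) = L ∘ WithLp.toLp 2 := by
    ext v
    simp [L, EuclideanSpace.inner_eq_star_dotProduct]
  have hnorm : ‖L‖ ^ 2 = x ⬝ᵥ x := by
    rw [innerSL_apply_norm, EuclideanSpace.real_norm_sq_eq]
    simp [dotProduct, sq]
  rw [hL, ← Measure.map_map (by fun_prop) (by fun_prop), map_pi_eq_stdGaussian,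
    IsGaussian.map_eq_gaussianReal, integral_strongDual_stdGaussian, variance_dual_stdGaussian,
    hnorm]

lemma measurable_dotProduct_right (x : ι → ℝ) : Measurable fun v : ι → ℝ => v ⬝ᵥ x := by
  unfold dotProduct
  fun_prop

lemma rowMeas_real_dotProduct_mem (x : ι → ℝ) {s : Set ℝ} (hs : MeasurableSet s) :
    (rowMeas ι).real {v | v ⬝ᵥ x ∈ s} = (gaussianReal 0 (x ⬝ᵥ x).toNNReal).real s := by
  rw [← map_dotProduct_rowMeas, map_measureReal_apply (measurable_dotProduct_right x) hs]
  rfl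

lemma dotProduct_self_pos {x : ι → ℝ} (hx : x ≠ 0) : 0 < x ⬝ᵥ x := by
  simpa using Matrix.dotProduct_self_star_pos_iff.2 hx

lemma ae_dotProduct_ne_zero {x : ι → ℝ} (hx : x ≠ 0) : ∀ᵐ v ∂rowMeas ι, v ⬝ᵥ x ≠ 0 := by
  have := nullSingletonClass_gaussianReal (μ := 0)
    (Real.toNNReal_pos.2 (dotProduct_self_pos hx)).ne'
  have hzero := rowMeas_real_dotProduct_mem x (measurableSet_singleton 0)
  rw [measureReal_def (gaussianReal _ _), measure_singleton, ENNReal.toReal_zero,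
    measureReal_eq_zero_iff] at hzero
  simpa [ae_iff] using hzero

variable (ι) in
lemma measurePreserving_neg_rowMeas : MeasurePreserving (fun v => -v) (rowMeas ι) (rowMeas ι) :=
  measurePreserving_pi _ _ fun _ =>
    ⟨measurable_neg, gaussianReal_map_neg.trans (by rw [neg_zero])⟩

/-- The output bit of a neuron with incoming weights `v` on the input `x`; as for `sgn`, the tie
`v ⬝ᵥ x = 0` counts as negative. -/
def signBit (x v : ι → ℝ) : Bool := decide (0 < v ⬝ᵥ x)

/-- The probability that a neuron with random Gaussian weights separates `x` from `y`. -/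
def flipProb (x y : ι → ℝ) : ℝ := (rowMeas ι).real {v | signBit x v ≠ signBit y v}

lemma measurable_signBit (x : ι → ℝ) : Measurable (signBit x) :=
  measurable_to_bool (by
    simpa [Set.preimage, signBit] using
      measurableSet_lt measurable_const (measurable_dotProduct_right x))

lemma measurableSet_signBit_eq_and_eq (x y : ι → ℝ) (a b : Bool) :
    MeasurableSet {v | signBit x v = a ∧ signBit y v = b} :=
  (measurable_signBit x (measurableSet_singleton a)).inter
    (measurable_signBit y (measurableSet_singleton b))

lemma signBit_neg {x v : ι → ℝ} (h : v ⬝ᵥ x ≠ 0) : signBit x (-v) = !signBit x v := by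
  rcases h.lt_or_gt with h | h <;> simp [signBit, neg_dotProduct, h, h.le]

lemma rowMeas_real_signBit_not {x y : ι → ℝ} (hx : x ≠ 0) (hy : y ≠ 0) (a b : Bool) :
    (rowMeas ι).real {v | signBit x v = !a ∧ signBit y v = !b} =
      (rowMeas ι).real {v | signBit x v = a ∧ signBit y v = b} := by
  rw [← (measurePreserving_neg_rowMeas ι).measureReal_preimage
    (measurableSet_signBit_eq_and_eq x y a b).nullMeasurableSet]
  refine measureReal_congr ?_
  filter_upwards [ae_dotProduct_ne_zero hx, ae_dotProduct_ne_zero hy] with v hvx hvy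
  refine propext (?_ : (_ ∧ _) ↔ (signBit x (-v) = a ∧ signBit y (-v) = b))
  rw [signBit_neg hvx, signBit_neg hvy, Bool.eq_not_iff, Bool.eq_not_iff, Bool.not_eq_iff,
    Bool.not_eq_iff]

lemma rowMeas_real_beq_signBit (x y : ι → ℝ) (c : Bool) :
    (rowMeas ι).real {v | (signBit x v == signBit y v) = c} =
      if c then 1 - flipProb x y else flipProb x y := by
  cases c
  · simp [flipProb]
  · have hmeas : MeasurableSet {v | signBit x v ≠ signBit y v} :=
      (measurableSet_eq_fun (measurable_signBit x) (measurable_signBit y)).compl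
    rw [if_pos rfl, flipProb, ← probReal_compl_eq_one_sub hmeas]
    congr 1
    ext v
    simp

-- The symmetry `v ↦ -v` exchanges the two halves `(a, b)` and `(!a, !b)` of the event that the
-- two bits agree exactly when `a` and `b` do.
lemma rowMeas_real_signBit_eq {x y : ι → ℝ} (hx : x ≠ 0) (hy : y ≠ 0) (a b : Bool) :
    (rowMeas ι).real {v | signBit x v = a ∧ signBit y v = b} =
      1 / 2 * if a = b then 1 - flipProb x y else flipProb x y := by
  have halves : {v | (signBit x v == signBit y v) = (a == b)} =
      {v | signBit x v = a ∧ signBit y v = b} ∪ {v | signBit x v = !a ∧ signBit y v = !b} := by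
    ext v
    simp only [Set.mem_ofPred_eq, Set.mem_union]
    cases signBit x v <;> cases signBit y v <;> cases a <;> cases b <;> decide
  have hdisj : Disjoint {v | signBit x v = a ∧ signBit y v = b}
      {v | signBit x v = !a ∧ signBit y v = !b} := by
    rw [Set.disjoint_left]
    rintro v ⟨ha, -⟩ ⟨hna, -⟩
    simp [ha] at hna
  have hsum := rowMeas_real_beq_signBit x y (a == b)
  rw [halves, measureReal_union hdisj (measurableSet_signBit_eq_and_eq ..),
    rowMeas_real_signBit_not hx hy] at hsum
  simp only [beq_iff_eq] at hsum
  linarith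

lemma flipProb_self (x : ι → ℝ) : flipProb x x = 0 := by simp [flipProb]

lemma flipProb_mem_Icc (x y : ι → ℝ) : flipProb x y ∈ Set.Icc 0 1 :=
  ⟨measureReal_nonneg, measureReal_le_one⟩

lemma abs_dotProduct_le_or_le_of_signBit_ne {x y v : ι → ℝ} (h : signBit x v ≠ signBit y v)
    (r : ℝ) : |v ⬝ᵥ x| ≤ r ∨ r ≤ |v ⬝ᵥ (x - y)| := by
  by_contra! hr
  rw [dotProduct_sub, abs_lt, lt_abs] at hr
  refine h (decide_eq_decide.2 ?_)
  grind

lemma flipProb_le {x : ι → ℝ} (hx : x ≠ 0) (y : ι → ℝ) {r : ℝ} (hr : 0 < r) :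
    flipProb x y ≤ r / √(x ⬝ᵥ x) + (x - y) ⬝ᵥ (x - y) / r ^ 2 := by
  have hself : ∀ z : ι → ℝ, 0 ≤ z ⬝ᵥ z := fun z => by simpa using dotProduct_self_star_nonneg z
  have hsmall : (rowMeas ι).real {v | |v ⬝ᵥ x| ≤ r} ≤ r / √(x ⬝ᵥ x) := by
    have := gaussianReal_real_abs_le (Real.toNNReal_pos.2 (dotProduct_self_pos hx)).ne' hr.le
    rwa [← rowMeas_real_dotProduct_mem x (measurableSet_le (by fun_prop) (by fun_prop)),
      Real.coe_toNNReal _ (hself x)] at this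
  have hlarge : (rowMeas ι).real {v | r ≤ |v ⬝ᵥ (x - y)|} ≤ (x - y) ⬝ᵥ (x - y) / r ^ 2 := by
    have := gaussianReal_real_le_abs ((x - y) ⬝ᵥ (x - y)).toNNReal hr
    rwa [← rowMeas_real_dotProduct_mem _ (measurableSet_le (by fun_prop) (by fun_prop)),
      Real.coe_toNNReal _ (hself _)] at this
  calc flipProb x y
      ≤ (rowMeas ι).real ({v | |v ⬝ᵥ x| ≤ r} ∪ {v | r ≤ |v ⬝ᵥ (x - y)|}) :=
        measureReal_mono fun v hv => abs_dotProduct_le_or_le_of_signBit_ne hv r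
    _ ≤ _ := (measureReal_union_le _ _).trans (add_le_add hsmall hlarge)

end GaussianRow

section PairMean

variable {n : ℕ} {ε : ℝ} {F G : (Fin n → Bool) → (Fin n → Bool) → ℝ}

lemma pairWeight_nonneg (hε : ε ∈ Set.Icc 0 1) (ω η : Fin n → Bool) : 0 ≤ pairWeight n ε ω η := by
  refine mul_nonneg (by positivity) (prod_nonneg fun i _ => ?_)
  split_ifs
  exacts [sub_nonneg.2 hε.2, hε.1]

lemma pairMean_mono (hε : ε ∈ Set.Icc 0 1) (h : ∀ ω η, F ω η ≤ G ω η) :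
    pairMean n ε F ≤ pairMean n ε G :=
  sum_le_sum fun ω _ => sum_le_sum fun η _ =>
    mul_le_mul_of_nonneg_left (h ω η) (pairWeight_nonneg hε ω η)

variable (n ε)

lemma pairMean_add (F G : (Fin n → Bool) → (Fin n → Bool) → ℝ) :
    pairMean n ε (fun ω η => F ω η + G ω η) = pairMean n ε F + pairMean n ε G := by
  simp [pairMean, mul_add, sum_add_distrib]

lemma pairMean_const_mul (c : ℝ) (F : (Fin n → Bool) → (Fin n → Bool) → ℝ) :
    pairMean n ε (fun ω η => c * F ω η) = c * pairMean n ε F := by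
  simp [pairMean, mul_sum, mul_left_comm]

lemma pairMean_sum {κ : Type*} (s : Finset κ) (F : κ → (Fin n → Bool) → (Fin n → Bool) → ℝ) :
    pairMean n ε (fun ω η => ∑ k ∈ s, F k ω η) = ∑ k ∈ s, pairMean n ε (F k) := by
  simp only [pairMean, mul_sum]
  rw [sum_comm (s := s)]
  exact sum_congr rfl fun ω _ => sum_comm

lemma pairMean_prod (f : Fin n → Bool → Bool → ℝ) :
    pairMean n ε (fun ω η => ∏ i, f i (ω i) (η i)) =
      ∏ i, (1 / 2 * ∑ a, ∑ b, (if a = b then 1 - ε else ε) * f i a b) := by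
  simp only [pairMean, pairWeight, prod_mul_distrib, prod_univ_sum, Fintype.piFinset_univ,
    mul_sum, prod_const, card_univ, Fintype.card_fin, mul_assoc]

lemma pairMean_const (c : ℝ) : pairMean n ε (fun _ _ => c) = c := by
  have hone : pairMean n ε (fun _ _ => 1) = 1 := by
    simpa [← two_mul] using pairMean_prod n ε fun _ _ _ => 1
  simpa [hone] using pairMean_const_mul n ε c fun _ _ => 1

lemma pairMean_bit_ne (i : Fin n) :
    pairMean n ε (fun ω η => if ω i = η i then 0 else 1) = ε := by
  have h := pairMean_prod n ε fun j a b => if j = i then (if a = b then 0 else 1) else 1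
  simp only [prod_ite_eq', mem_univ, if_true] at h
  rw [h, prod_eq_single i]
  · simp [← two_mul]
  · intro j _ hj
    simp [hj, ← two_mul]
  · simp

lemma pairMean_hammingDist : pairMean n ε (fun ω η => hammingDist ω η) = n * ε := by
  have hsum : ∀ ω η : Fin n → Bool,
      (hammingDist ω η : ℝ) = ∑ i, if ω i = η i then 0 else 1 := fun ω η => by
    simp [hammingDist, card_filter, ite_not]
  simp [hsum, pairMean_sum, pairMean_bit_ne]

variable {n}

lemma pairWeight_zero_of_ne {ω η : Fin n → Bool} (h : ω ≠ η) : pairWeight n 0 ω η = 0 := by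
  obtain ⟨i, hi⟩ := Function.ne_iff.1 h
  rw [pairWeight, prod_eq_zero (mem_univ i) (if_neg hi), mul_zero]

lemma disagreeProb_zero (f : (Fin n → Bool) → Bool) : disagreeProb n 0 f = 0 := by
  refine sum_eq_zero fun ω _ => sum_eq_zero fun η _ => ?_
  obtain rfl | h := eq_or_ne ω η
  · simp
  · rw [pairWeight_zero_of_ne h, zero_mul]

variable {ε}

lemma disagreeProb_mem_Icc (hε : ε ∈ Set.Icc 0 1) (f : (Fin n → Bool) → Bool) :
    disagreeProb n ε f ∈ Set.Icc 0 1 := by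
  rw [← pairMean_const n ε 0, ← pairMean_const n ε 1]
  constructor <;> refine pairMean_mono hε fun ω η => ?_ <;> split_ifs <;> simp

lemma integral_pairMean {Ω : Type*} [MeasurableSpace Ω] {μ : Measure Ω}
    {F : Ω → (Fin n → Bool) → (Fin n → Bool) → ℝ} (hF : ∀ ω η, Integrable (fun x => F x ω η) μ) :
    ∫ x, pairMean n ε (F x) ∂μ = pairMean n ε fun ω η => ∫ x, F x ω η ∂μ := by
  have hterm : ∀ ω η, Integrable (fun x => pairWeight n ε ω η * F x ω η) μ :=
    fun ω η => (hF ω η).const_mul _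
  unfold pairMean
  rw [integral_finsetSum _ fun ω _ => integrable_finsetSum _ fun η _ => hterm ω η]
  refine sum_congr rfl fun ω _ => ?_
  rw [integral_finsetSum _ fun η _ => hterm ω η]
  exact sum_congr rfl fun η _ => integral_const_mul ..

end PairMean

section Layer

variable {n : ℕ}

/-- One layer of the sign network, as a map of the Boolean cube to itself. -/
def layerBits (θ : Fin n → Fin n → ℝ) (ω : Fin n → Bool) : Fin n → Bool :=
  fun i => signBit (fun j => chi (ω j)) (θ i)

/-- The probability that a given output bit of a random layer differs on the inputs `ω`, `η`. -/
def layerFlipProb (ω η : Fin n → Bool) : ℝ :=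
  flipProb (fun j => chi (ω j)) (fun j => chi (η j))

variable (n) in
/-- The law of the weight matrix of a single layer. -/
abbrev layerMeas : Measure (Fin n → Fin n → ℝ) := Measure.pi fun _ => rowMeas (Fin n)

lemma chi_mul_self (b : Bool) : chi b * chi b = 1 := by cases b <;> simp [chi]

lemma chi_comp_ne_zero (i : Fin n) (ω : Fin n → Bool) : (fun j => chi (ω j)) ≠ 0 := fun h => by
  simpa [congrFun h i] using chi_mul_self (ω i)

lemma chi_dotProduct_self (ω : Fin n → Bool) :
    (fun j => chi (ω j)) ⬝ᵥ (fun j => chi (ω j)) = n := by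
  simp [dotProduct, chi_mul_self]

lemma chi_sub_dotProduct_self (ω η : Fin n → Bool) :
    ((fun j => chi (ω j)) - fun j => chi (η j)) ⬝ᵥ ((fun j => chi (ω j)) - fun j => chi (η j)) =
      4 * hammingDist ω η := by
  rw [hammingDist, card_filter, Nat.cast_sum, mul_sum]
  refine sum_congr rfl fun j _ => ?_
  cases hω : ω j <;> cases hη : η j <;> norm_num [chi, hω, hη]

lemma layerFlipProb_mem_Icc (ω η : Fin n → Bool) : layerFlipProb ω η ∈ Set.Icc 0 1 :=
  flipProb_mem_Icc _ _

lemma layerFlipProb_le (ω η : Fin n → Bool) {s : ℝ} (hs : 0 < s) :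
    layerFlipProb ω η ≤ s + 4 / (n * s ^ 2) * hammingDist ω η := by
  obtain rfl | hn := n.eq_zero_or_pos
  · rw [Subsingleton.elim η ω, layerFlipProb, flipProb_self]
    positivity
  have hsqrt : 0 < √(n : ℝ) := by positivity
  have h := flipProb_le (chi_comp_ne_zero ⟨0, hn⟩ ω) (fun j => chi (η j)) (mul_pos hs hsqrt)
  rw [chi_dotProduct_self, chi_sub_dotProduct_self, mul_pow, Real.sq_sqrt n.cast_nonneg,
    mul_div_cancel_right₀ _ hsqrt.ne'] at h
  calc layerFlipProb ω η ≤ s + 4 * hammingDist ω η / (s ^ 2 * n) := h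
    _ = s + 4 / (n * s ^ 2) * hammingDist ω η := by ring

lemma pairMean_layerFlipProb_le {ε : ℝ} (hε : ε ∈ Set.Icc 0 1) {s : ℝ} (hs : 0 < s) :
    pairMean n ε layerFlipProb ≤ s + 4 * ε / s ^ 2 := by
  calc pairMean n ε layerFlipProb
      ≤ pairMean n ε fun ω η => s + 4 / (n * s ^ 2) * hammingDist ω η :=
        pairMean_mono hε fun ω η => layerFlipProb_le ω η hs
    _ = s + 4 / (n * s ^ 2) * (n * ε) := by
        rw [pairMean_add, pairMean_const, pairMean_const_mul, pairMean_hammingDist]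
    _ ≤ s + 4 * ε / s ^ 2 := by
        obtain rfl | hn := n.eq_zero_or_pos
        · have := hε.1
          simp only [Nat.cast_zero, zero_mul, mul_zero, add_zero]
          exact le_add_of_nonneg_right (by positivity)
        · refine le_of_eq ?_
          field_simp

lemma measurable_layerBits (ω : Fin n → Bool) :
    Measurable fun θ : Fin n → Fin n → ℝ => layerBits θ ω :=
  measurable_pi_lambda _ fun i => (measurable_signBit _).comp (measurable_pi_apply i)

lemma layerMeas_real_layerBits_eq (ω η a b : Fin n → Bool) :
    (layerMeas n).real {θ | layerBits θ ω = a ∧ layerBits θ η = b} =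
      pairWeight n (layerFlipProb ω η) a b := by
  have hrows : {θ | layerBits θ ω = a ∧ layerBits θ η = b} =
      Set.pi Set.univ fun i => {v | signBit (fun j => chi (ω j)) v = a i ∧
        signBit (fun j => chi (η j)) v = b i} := by
    ext θ
    simp [layerBits, funext_iff, forall_and]
  rw [hrows, measureReal_def, Measure.pi_pi, ENNReal.toReal_prod]
  simp only [← measureReal_def]
  rw [prod_congr rfl fun i _ =>
    rowMeas_real_signBit_eq (chi_comp_ne_zero i ω) (chi_comp_ne_zero i η) (a i) (b i)]
  rw [prod_mul_distrib, prod_const, card_univ, Fintype.card_fin]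
  rfl

lemma integral_layerBits (ω η : Fin n → Bool) (F : (Fin n → Bool) → (Fin n → Bool) → ℝ) :
    ∫ θ, F (layerBits θ ω) (layerBits θ η) ∂layerMeas n = pairMean n (layerFlipProb ω η) F := by
  have hmeas : Measurable fun θ => (layerBits θ ω, layerBits θ η) :=
    (measurable_layerBits ω).prodMk (measurable_layerBits η)
  calc ∫ θ, F (layerBits θ ω) (layerBits θ η) ∂layerMeas n
      = ∫ p, F p.1 p.2 ∂(layerMeas n).map fun θ => (layerBits θ ω, layerBits θ η) :=
        (integral_map (f := fun p => F p.1 p.2) hmeas.aemeasurable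
          (measurable_of_finite _).aestronglyMeasurable).symm
    _ = ∑ p : (Fin n → Bool) × (Fin n → Bool),
          pairWeight n (layerFlipProb ω η) p.1 p.2 * F p.1 p.2 := by
        rw [integral_fintype .of_finite]
        refine sum_congr rfl fun p _ => ?_
        rw [map_measureReal_apply hmeas (measurableSet_singleton p), smul_eq_mul,
          ← layerMeas_real_layerBits_eq]
        congr 2
        ext θ
        simp [Prod.ext_iff]
    _ = pairMean n (layerFlipProb ω η) F := Fintype.sum_prod_type _

lemma integral_disagreeProb_comp_layerBits (ε : ℝ) (f : (Fin n → Bool) → Bool) :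
    ∫ θ, disagreeProb n ε (f ∘ layerBits θ) ∂layerMeas n =
      pairMean n ε fun ω η => disagreeProb n (layerFlipProb ω η) f := by
  let G : (Fin n → Bool) → (Fin n → Bool) → ℝ := fun a b => if f a = f b then 0 else 1
  calc ∫ θ, pairMean n ε (fun ω η => G (layerBits θ ω) (layerBits θ η)) ∂layerMeas n
      = pairMean n ε fun ω η => ∫ θ, G (layerBits θ ω) (layerBits θ η) ∂layerMeas n :=
        integral_pairMean fun ω η => integrable_comp_of_finite
          ((measurable_layerBits ω).prodMk (measurable_layerBits η)) fun p => G p.1 p.2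
    _ = pairMean n ε fun ω η => disagreeProb n (layerFlipProb ω η) f := by
        simp only [integral_layerBits]
        rfl

end Layer

section Network

variable {n T : ℕ}

instance isProbabilityMeasure_weightMeas : IsProbabilityMeasure (weightMeas n T) := by
  unfold weightMeas
  infer_instance

lemma network_cons (θ : Fin n → Fin n → ℝ) (Θ : Fin T → Fin n → Fin n → ℝ) (x : Fin n → ℝ) :
    network n (T + 1) (Fin.cons θ Θ) x = network n T Θ (layerMap n θ x) := by
  simp [network, List.ofFn_succ]

lemma layerMap_chi (θ : Fin n → Fin n → ℝ) (ω : Fin n → Bool) :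
    layerMap n θ (fun j => chi (ω j)) = fun j => chi (layerBits θ ω j) := by
  ext i
  simp [layerMap, layerBits, signBit, sgn, chi, dotProduct]

lemma boolOut_zero (h : (Fin n → Bool) → Bool) (Θ : Fin 0 → Fin n → Fin n → ℝ) :
    boolOut n 0 h Θ = h := by
  ext ω
  have hsign : ∀ b, decide (0 < chi b) = b := by
    intro b
    cases b <;> norm_num [chi]
  simp [boolOut, network, hsign]

lemma boolOut_cons (h : (Fin n → Bool) → Bool) (θ : Fin n → Fin n → ℝ)
    (Θ : Fin T → Fin n → Fin n → ℝ) :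
    boolOut n (T + 1) h (Fin.cons θ Θ) = boolOut n T h Θ ∘ layerBits θ := by
  ext ω
  simp only [boolOut, network_cons, layerMap_chi, Function.comp_apply]

lemma measurable_sgn : Measurable sgn :=
  Measurable.ite measurableSet_Ioi measurable_const measurable_const

lemma measurable_layerMap {Ω : Type*} [MeasurableSpace Ω] {θ : Ω → Fin n → Fin n → ℝ}
    {x : Ω → Fin n → ℝ} (hθ : Measurable θ) (hx : Measurable x) :
    Measurable fun a => layerMap n (θ a) (x a) :=
  measurable_pi_lambda _ fun i => measurable_sgn.comp (by fun_prop)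

lemma measurable_network :
    Measurable fun p : (Fin T → Fin n → Fin n → ℝ) × (Fin n → ℝ) => network n T p.1 p.2 := by
  induction T with
  | zero => exact measurable_snd
  | succ T ih =>
    have hstep : Measurable fun p : (Fin (T + 1) → Fin n → Fin n → ℝ) × (Fin n → ℝ) =>
        (Fin.tail p.1, layerMap n (p.1 0) p.2) :=
      (measurable_pi_lambda _ fun t => (measurable_pi_apply t.succ).comp measurable_fst).prodMk
        (measurable_layerMap ((measurable_pi_apply 0).comp measurable_fst) measurable_snd)
    convert! ih.comp hstep with p
    rw [Function.comp_apply, ← network_cons, Fin.cons_self_tail]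

lemma measurable_boolOut (h : (Fin n → Bool) → Bool) : Measurable (boolOut n T h) := by
  refine measurable_pi_lambda _ fun ω => (measurable_of_finite h).comp ?_
  have hnet : Measurable fun Θ => network n T Θ fun j => chi (ω j) :=
    measurable_network.comp measurable_prodMk_right
  exact measurable_pi_lambda _ fun i => measurable_to_bool (by
    simpa [Set.preimage] using
      measurableSet_lt measurable_const (measurable_pi_iff.1 hnet i))

lemma integrable_disagreeProb_boolOut (ε : ℝ) (h : (Fin n → Bool) → Bool) :
    Integrable (fun Θ => disagreeProb n ε (boolOut n T h Θ)) (weightMeas n T) :=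
  integrable_comp_of_finite (measurable_boolOut h) (disagreeProb n ε)

/-- The annealed disagreement probability `P_{Θ,ω,ω^ε}(f_{n,T}(ω) ≠ f_{n,T}(ω^ε))`. -/
def annealedDisagreeProb (n T : ℕ) (h : (Fin n → Bool) → Bool) (ε : ℝ) : ℝ :=
  ∫ Θ, disagreeProb n ε (boolOut n T h Θ) ∂weightMeas n T

lemma annealedDisagreeProb_depth_zero (h : (Fin n → Bool) → Bool) :
    annealedDisagreeProb n 0 h = fun ε => disagreeProb n ε h := by
  ext ε
  simp [annealedDisagreeProb, boolOut_zero]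

lemma annealedDisagreeProb_depth_succ (h : (Fin n → Bool) → Bool) :
    annealedDisagreeProb n (T + 1) h = fun ε =>
      pairMean n ε fun ω η => annealedDisagreeProb n T h (layerFlipProb ω η) := by
  ext ε
  calc annealedDisagreeProb n (T + 1) h ε
      = ∫ Θ, ∫ θ, disagreeProb n ε (boolOut n T h Θ ∘ layerBits θ) ∂layerMeas n
          ∂weightMeas n T := by
        simp only [← boolOut_cons]
        exact integral_pi_fin_succ (integrable_disagreeProb_boolOut ε h)
    _ = ∫ Θ, pairMean n ε (fun ω η => disagreeProb n (layerFlipProb ω η) (boolOut n T h Θ))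
          ∂weightMeas n T := by
        simp only [integral_disagreeProb_comp_layerBits]
    _ = pairMean n ε fun ω η => annealedDisagreeProb n T h (layerFlipProb ω η) :=
        integral_pairMean fun ω η => integrable_disagreeProb_boolOut _ h

lemma annealedDisagreeProb_noise_zero (h : (Fin n → Bool) → Bool) :
    annealedDisagreeProb n T h 0 = 0 := by
  simp [annealedDisagreeProb, disagreeProb_zero]

lemma annealedDisagreeProb_le_one (h : (Fin n → Bool) → Bool) {ε : ℝ} (hε : ε ∈ Set.Icc 0 1) :
    annealedDisagreeProb n T h ε ≤ 1 := by
  simpa [annealedDisagreeProb] using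
    integral_mono (integrable_disagreeProb_boolOut (T := T) ε h) (integrable_const 1)
      fun Θ => (disagreeProb_mem_Icc hε _).2

end Network

section NoiseStability

/-- The numbers `A i ε` tend to `0` as `ε ↓ 0`, uniformly in `i`: with `A n ε` the probability
that the `n`-th function of a sequence disagrees on `ω` and `ω^ε`, this is noise stability. -/
def VanishesUniformly {ι : Type*} (A : ι → ℝ → ℝ) : Prop :=
  ∀ δ > 0, ∀ᶠ ε in 𝓝[>] (0 : ℝ), ∀ i, A i ε < δ

lemma vanishesUniformly_iff {ι : Type*} {A : ι → ℝ → ℝ} :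
    VanishesUniformly A ↔
      ∀ δ : ℝ, 0 < δ → ∃ ε₀ : ℝ, 0 < ε₀ ∧ ∀ ε : ℝ, 0 < ε → ε ≤ ε₀ → ∀ i, A i ε < δ := by
  simp only [VanishesUniformly, (nhdsGT_basis_Ioc (0 : ℝ)).eventually_iff, Set.mem_Ioc, and_imp,
    gt_iff_lt]

namespace VanishesUniformly

lemma of_bounded_index {ι : Type*} {A : ℕ → ι → ℝ → ℝ} (hA : ∀ t, VanishesUniformly (A t))
    {T : ι → ℕ} {C : ℕ} (hT : ∀ i, T i ≤ C) : VanishesUniformly fun i => A (T i) i := by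
  intro δ hδ
  filter_upwards [(eventually_all_finite (Set.finite_Iic C)).2 fun t _ => hA t δ hδ] with ε hε i
  exact hε (T i) (hT i) i

lemma exists_le_add_mul {ι : Type*} {A : ι → ℝ → ℝ} (hA : VanishesUniformly A)
    (hzero : ∀ i, A i 0 ≤ 0) (hone : ∀ i, ∀ p ∈ Set.Icc (0 : ℝ) 1, A i p ≤ 1) {δ : ℝ}
    (hδ : 0 < δ) : ∃ K > 0, ∀ i, ∀ p ∈ Set.Icc (0 : ℝ) 1, A i p ≤ δ + K * p := by
  obtain ⟨ε₀, hε₀, hsmall⟩ := vanishesUniformly_iff.1 hA δ hδ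
  refine ⟨ε₀⁻¹, inv_pos.2 hε₀, fun i p hp => ?_⟩
  have hKp : 0 ≤ ε₀⁻¹ * p := mul_nonneg (inv_pos.2 hε₀).le hp.1
  obtain hp0 | hp0 := hp.1.eq_or_lt
  · linarith [hp0 ▸ hzero i]
  obtain hle | hgt := le_or_gt p ε₀
  · linarith [hsmall p hp0 hle i]
  · have : 1 ≤ ε₀⁻¹ * p := by
      rw [inv_mul_eq_div, one_le_div hε₀]
      exact hgt.le
    linarith [hone i p hp]

end VanishesUniformly

lemma vanishesUniformly_pairMean_layerFlipProb :
    VanishesUniformly fun n ε => pairMean n ε layerFlipProb := by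
  intro δ hδ
  have hlim : Tendsto (fun ε : ℝ => δ / 2 + 4 * ε / (δ / 2) ^ 2) (𝓝[>] 0) (𝓝 (δ / 2)) :=
    tendsto_nhdsWithin_of_tendsto_nhds (Continuous.tendsto' (by fun_prop) _ _ (by simp))
  filter_upwards [hlim.eventually_lt_const (half_lt_self hδ), Ioc_mem_nhdsGT zero_lt_one]
    with ε hlt hε n
  exact (pairMean_layerFlipProb_le (Set.Ioc_subset_Icc_self hε) (half_pos hδ)).trans_lt hlt

lemma VanishesUniformly.pairMean_comp_layerFlipProb {A : ℕ → ℝ → ℝ} (hA : VanishesUniformly A)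
    (hzero : ∀ n, A n 0 ≤ 0) (hone : ∀ n, ∀ p ∈ Set.Icc (0 : ℝ) 1, A n p ≤ 1) :
    VanishesUniformly fun n ε => pairMean n ε fun ω η => A n (layerFlipProb ω η) := by
  intro δ hδ
  obtain ⟨K, hK, hbound⟩ := hA.exists_le_add_mul hzero hone (half_pos hδ)
  filter_upwards [vanishesUniformly_pairMean_layerFlipProb (δ / 2 / K) (by positivity),
    Ioc_mem_nhdsGT zero_lt_one] with ε hflip hε n
  calc pairMean n ε (fun ω η => A n (layerFlipProb ω η))
      ≤ pairMean n ε fun ω η => δ / 2 + K * layerFlipProb ω η :=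
        pairMean_mono (Set.Ioc_subset_Icc_self hε) fun ω η =>
          hbound n _ (layerFlipProb_mem_Icc ω η)
    _ = δ / 2 + K * pairMean n ε layerFlipProb := by
        rw [pairMean_add, pairMean_const, pairMean_const_mul]
    _ < δ / 2 + K * (δ / 2 / K) := by gcongr; exact hflip n
    _ = δ := by field_simp; ring

variable {h : (n : ℕ) → (Fin n → Bool) → Bool}

lemma vanishesUniformly_annealedDisagreeProb
    (hstable : VanishesUniformly fun n ε => disagreeProb n ε (h n)) (t : ℕ) :
    VanishesUniformly fun n => annealedDisagreeProb n t (h n) := by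
  induction t with
  | zero => simpa only [annealedDisagreeProb_depth_zero] using hstable
  | succ t ih =>
    simpa only [annealedDisagreeProb_depth_succ] using ih.pairMean_comp_layerFlipProb
      (fun n => (annealedDisagreeProb_noise_zero (h n)).le)
      fun n _ => annealedDisagreeProb_le_one (h n)

lemma exists_ofReal_one_sub_le_weightMeas_disagreeProb_lt {T : ℕ → ℕ}
    (hannealed : VanishesUniformly fun n => annealedDisagreeProb n (T n) (h n)) {δ : ℝ}
    (hδ : 0 < δ) : ∃ ε : ℝ, 0 < ε ∧ ∀ n, ENNReal.ofReal (1 - δ) ≤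
      weightMeas n (T n) {Θ | disagreeProb n ε (boolOut n (T n) (h n) Θ) < δ} := by
  obtain ⟨ε, hsmall, hε⟩ :=
    ((hannealed (δ ^ 2) (by positivity)).and (Ioc_mem_nhdsGT zero_lt_one)).exists
  refine ⟨ε, hε.1, fun n => ofReal_one_sub_le_measure_lt_of_integral_le_sq ?_
    (integrable_disagreeProb_boolOut ε (h n)) hδ (hsmall n).le⟩
  exact ae_of_all _ fun Θ => (disagreeProb_mem_Icc (Set.Ioc_subset_Icc_self hε) _).1

end NoiseStability

/-- for the fully connected sign network with i.i.d. standard normal weights,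
if the deterministic sequence `{h_n}` is noise stable and the depths `T_n` are bounded, then
the random network outputs are annealed (and hence quenched) noise stable. -/
theorem noise_stable_of_bounded_depth
    (T : ℕ → ℕ) (hT : ∃ C : ℕ, ∀ n, T n ≤ C)
    (h : (n : ℕ) → (Fin n → Bool) → Bool)
    (hstable : ∀ δ : ℝ, 0 < δ → ∃ ε₀ : ℝ, 0 < ε₀ ∧ ∀ ε : ℝ, 0 < ε → ε ≤ ε₀ → ∀ n : ℕ,
        disagreeProb n ε (h n) < δ) :
    -- annealed noise stable
    ((∀ δ : ℝ, 0 < δ → ∃ ε₀ : ℝ, 0 < ε₀ ∧ ∀ ε : ℝ, 0 < ε → ε ≤ ε₀ → ∀ n : ℕ,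
        (∫ Θ, disagreeProb n ε (boolOut n (T n) (h n) Θ) ∂weightMeas n (T n)) < δ)
      ∧
      -- quenched noise stable
      (∀ δ : ℝ, 0 < δ → ∃ ε : ℝ, 0 < ε ∧ ∀ n : ℕ,
        ENNReal.ofReal (1 - δ) ≤
          weightMeas n (T n) {Θ | disagreeProb n ε (boolOut n (T n) (h n) Θ) < δ})) := by
  obtain ⟨C, hC⟩ := hT
  have hannealed : VanishesUniformly fun n => annealedDisagreeProb n (T n) (h n) :=
    .of_bounded_index (vanishesUniformly_annealedDisagreeProb (vanishesUniformly_iff.2 hstable)) hC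
  exact ⟨vanishesUniformly_iff.1 hannealed,
    fun _ => exists_ofReal_one_sub_le_weightMeas_disagreeProb_lt hannealed⟩

end
end

section
/- Let v ∈ [0,1], let w = (a,b) ∈ ℝ² with r = ‖w‖₂, and let X ~ N(a,1) and Y ~ N(b,1) be independent. Define g_w(v) = P(|Y| ≤ √(v/(1−v))·|X|) and g(v) = (2/π)·arctan(√(v/(1−v))). Then g_w(v) ≥ g(v)·e^{−r²/2}. -/
open MeasureTheory ProbabilityTheory Real

noncomputable section

/-- `g_w(v)`: the probability that a 2-dimensional Gaussian with mean `w = (a,b)` and identity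
covariance lies in the double cone `A_v = {(x,y) : |y| ≤ √(v/(1-v))·|x|}`. -/
def gCone (a b v : ℝ) : ℝ :=
  (((gaussianReal a 1).prod (gaussianReal b 1))
      {p : ℝ × ℝ | |p.2| ≤ √(v / (1 - v)) * |p.1|}).toReal

/-!
The Gaussian density with mean `w` is `e^{-r²/2} e^{⟨w, p⟩}` times the centred one. On a set
`A = -A` the reflection `p ↦ -p` lets us replace `e^{⟨w, p⟩}` by its even part `cosh ⟨w, p⟩ ≥ 1`,
so the shifted measure of `A` is at least `e^{-r²/2}` times its centred measure. For the double
cone the latter is explicit: `|Y| ≤ c |X|` means `|Y / X| ≤ c`, and the ratio of independent centred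
Gaussians has a Cauchy law, whose distribution function is an arctangent.
-/

open scoped NNReal Pointwise

instance isNegInvariant_prod {G H : Type*} [MeasurableSpace G] [MeasurableSpace H] [Neg G] [Neg H]
    [MeasurableNeg G] [MeasurableNeg H] (μ : Measure G) (ν : Measure H) [SFinite μ] [SFinite ν]
    [μ.IsNegInvariant] [ν.IsNegInvariant] : (μ.prod ν).IsNegInvariant where
  neg_eq_self := ((Measure.measurePreserving_neg μ).prod (Measure.measurePreserving_neg ν)).map_eq

instance isNegInvariant_gaussianReal_zero (v : ℝ≥0) : (gaussianReal 0 v).IsNegInvariant where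
  neg_eq_self := by
    rw [Measure.neg_def]
    simpa only [neg_zero] using gaussianReal_map_neg (μ := 0) (v := v)

lemma two_le_exp_add_exp_neg (x : ℝ) : 2 ≤ exp x + exp (-x) := by
  linarith [one_le_cosh x, cosh_eq x]

lemma measure_le_setLIntegral_exp_of_odd {G : Type*} [MeasurableSpace G] [InvolutiveNeg G]
    [MeasurableNeg G] {μ : Measure G} [μ.IsNegInvariant] {f : G → ℝ} (hf : Measurable f)
    (hodd : f.Odd) {A : Set G} (hA : -A = A) :
    μ A ≤ ∫⁻ x in A, ENNReal.ofReal (exp (f x)) ∂μ := by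
  have h_reflect : ∫⁻ x in A, ENNReal.ofReal (exp (-f x)) ∂μ =
      ∫⁻ x in A, ENNReal.ofReal (exp (f x)) ∂μ := by
    have h := (Measure.measurePreserving_neg μ).setLIntegral_comp_preimage_emb
      (MeasurableEquiv.neg G).measurableEmbedding (fun x ↦ ENNReal.ofReal (exp (f x))) A
    have hA' : Neg.neg ⁻¹' A = A := hA
    simpa only [hA', hodd _] using h
  have h_double : 2 * μ A ≤ 2 * ∫⁻ x in A, ENNReal.ofReal (exp (f x)) ∂μ :=
    calc 2 * μ A = ∫⁻ _ in A, 2 ∂μ := (setLIntegral_const A 2).symm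
      _ ≤ ∫⁻ x in A, (ENNReal.ofReal (exp (f x)) + ENNReal.ofReal (exp (-f x))) ∂μ := by
        refine lintegral_mono fun x ↦ ?_
        rw [← ENNReal.ofReal_add (exp_pos _).le (exp_pos _).le, ← ENNReal.ofReal_ofNat 2]
        exact ENNReal.ofReal_le_ofReal (two_le_exp_add_exp_neg (f x))
      _ = 2 * ∫⁻ x in A, ENNReal.ofReal (exp (f x)) ∂μ := by
        rw [lintegral_add_left (by fun_prop), h_reflect, two_mul]
  exact (ENNReal.mul_le_mul_iff_right two_ne_zero ENNReal.ofNat_ne_top).mp h_double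

lemma gaussianReal_eq_withDensity_exp (m : ℝ) {v : ℝ≥0} (hv : v ≠ 0) :
    gaussianReal m v = (gaussianReal 0 v).withDensity
      fun x ↦ ENNReal.ofReal (exp (-(m ^ 2 / v) / 2) * exp (m * x / v)) := by
  rw [gaussianReal_of_var_ne_zero m hv, gaussianReal_of_var_ne_zero 0 hv,
    ← withDensity_mul _ (by fun_prop) (by fun_prop)]
  congr with x
  rw [Pi.mul_apply, gaussianPDF, gaussianPDF,
    ← ENNReal.ofReal_mul (gaussianPDFReal_nonneg 0 v x), gaussianPDFReal, gaussianPDFReal,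
    mul_assoc (√_)⁻¹, ← exp_add, ← exp_add]
  congr 3
  field

lemma exp_mul_gaussianReal_zero_prod_le_of_neg_eq {s t : ℝ≥0} (hs : s ≠ 0) (ht : t ≠ 0) (a b : ℝ)
    {A : Set (ℝ × ℝ)} (hA : -A = A) :
    ENNReal.ofReal (exp (-(a ^ 2 / s + b ^ 2 / t) / 2)) *
        ((gaussianReal 0 s).prod (gaussianReal 0 t)) A ≤
      ((gaussianReal a s).prod (gaussianReal b t)) A := by
  let f : ℝ × ℝ → ℝ := fun p ↦ a * p.1 / s + b * p.2 / t
  have hf : Measurable f := by fun_prop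
  have hodd : f.Odd := fun p ↦ by simp only [f, Prod.fst_neg, Prod.snd_neg]; ring
  have h_density (p : ℝ × ℝ) :
      ENNReal.ofReal (exp (-(a ^ 2 / s) / 2) * exp (a * p.1 / s)) *
          ENNReal.ofReal (exp (-(b ^ 2 / t) / 2) * exp (b * p.2 / t)) =
        ENNReal.ofReal (exp (-(a ^ 2 / s + b ^ 2 / t) / 2)) * ENNReal.ofReal (exp (f p)) := by
    rw [← ENNReal.ofReal_mul (by positivity), ← ENNReal.ofReal_mul (by positivity)]
    simp only [← exp_add, f]
    ring_nf
  rw [gaussianReal_eq_withDensity_exp a hs, gaussianReal_eq_withDensity_exp b ht,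
    prod_withDensity (by fun_prop) (by fun_prop), withDensity_apply' _ A]
  simp only [h_density]
  rw [lintegral_const_mul _ (by fun_prop)]
  gcongr
  exact measure_le_setLIntegral_exp_of_odd hf hodd hA

lemma integrable_abs_mul_exp_neg_mul_sq {b : ℝ} (hb : 0 < b) :
    Integrable fun x : ℝ ↦ |x| * exp (-b * x ^ 2) := by
  simpa [abs_mul] using (integrable_mul_exp_neg_mul_sq hb).abs

lemma integral_abs_mul_exp_neg_mul_sq {b : ℝ} (hb : 0 < b) :
    ∫ x : ℝ, |x| * exp (-b * x ^ 2) = b⁻¹ := by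
  have h_half : ∫ x in Set.Ioi (0 : ℝ), x * exp (-b * x ^ 2) = b⁻¹ * 2⁻¹ := by
    simpa [rpow_neg_one, show ((1 : ℝ) + 1) / 2 = 1 by norm_num,
      show -((1 : ℝ) + 1) / 2 = -1 by norm_num] using
      integral_rpow_mul_exp_neg_mul_rpow two_pos (by norm_num : (-1 : ℝ) < 1) hb
  have h_abs := integral_comp_abs (f := fun x ↦ x * exp (-b * x ^ 2))
  simp only [sq_abs] at h_abs
  rw [h_abs, h_half]
  ring

lemma gaussianPDFReal_zero_mul_gaussianPDFReal_div_sq (s t : ℝ≥0) (x y : ℝ) :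
    gaussianPDFReal 0 s x * gaussianPDFReal 0 (t / .mk (x ^ 2) (sq_nonneg x)) y =
      (2 * π * √(s * t))⁻¹ * (|x| * exp (-(((s : ℝ)⁻¹ + y ^ 2 / t) / 2) * x ^ 2)) := by
  have h_sqrt : √(2 * π * s) * √(2 * π * (t / x ^ 2)) = 2 * π * √(s * t) / |x| := by
    rw [← sqrt_mul (by positivity), ← sqrt_sq_eq_abs, ← sqrt_sq (by positivity : 0 ≤ 2 * π),
      ← sqrt_mul (by positivity), ← sqrt_div (by positivity), sqrt_sq (by positivity)]
    congr 1
    ring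
  have h_exp : -(x - 0) ^ 2 / (2 * s) + -(y - 0) ^ 2 / (2 * (t / x ^ 2)) =
      -(((s : ℝ)⁻¹ + y ^ 2 / t) / 2) * x ^ 2 := by
    rw [← mul_div_assoc, div_div_eq_mul_div]
    ring
  rw [gaussianPDFReal, gaussianPDFReal, NNReal.coe_div, NNReal.coe_mk, mul_mul_mul_comm,
    ← mul_inv, h_sqrt, ← exp_add, h_exp, inv_div]
  ring

lemma lintegral_gaussianPDF_div_sq {s t : ℝ≥0} (hs : s ≠ 0) (ht : t ≠ 0) (y : ℝ) :
    ∫⁻ x, gaussianPDF 0 (t / .mk (x ^ 2) (sq_nonneg x)) y ∂gaussianReal 0 s =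
      cauchyPDF 0 (NNReal.sqrt (t / s)) y := by
  have hb : 0 < ((s : ℝ)⁻¹ + y ^ 2 / t) / 2 := by positivity
  have h_const : (2 * π * √(s * t))⁻¹ * (((s : ℝ)⁻¹ + y ^ 2 / t) / 2)⁻¹ =
      cauchyPDFReal 0 (NNReal.sqrt (t / s)) y := by
    have h_sq : √(s * t : ℝ) ^ 2 = s * t := sq_sqrt (by positivity)
    have h_sqrt : √(t / s : ℝ) = √(s * t) / s := by
      rw [← sqrt_sq (by positivity : (0 : ℝ) ≤ s), ← sqrt_div (by positivity),
        sqrt_sq (by positivity)]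
      congr 1
      field
    rw [cauchyPDFReal, coe_sqrt, NNReal.coe_div, sq_sqrt (by positivity), h_sqrt]
    field_simp
    rw [h_sq]
    field
  rw [gaussianReal_of_var_ne_zero 0 hs,
    lintegral_withDensity_eq_lintegral_mul _ (by fun_prop) (by fun_prop)]
  simp only [Pi.mul_apply, gaussianPDF, ← ENNReal.ofReal_mul (gaussianPDFReal_nonneg _ _ _),
    gaussianPDFReal_zero_mul_gaussianPDFReal_div_sq]
  rw [← ofReal_integral_eq_lintegral_ofReal
      ((integrable_abs_mul_exp_neg_mul_sq hb).const_mul _) (ae_of_all _ fun x ↦ by positivity),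
    integral_const_mul, integral_abs_mul_exp_neg_mul_sq hb, h_const, cauchyPDF]

lemma gaussianReal_zero_prod_map_div {s t : ℝ≥0} (hs : s ≠ 0) (ht : t ≠ 0) :
    ((gaussianReal 0 s).prod (gaussianReal 0 t)).map (fun p ↦ p.2 / p.1) =
      cauchyMeasure 0 (NNReal.sqrt (t / s)) := by
  have := nullSingletonClass_gaussianReal (μ := 0) hs
  have h_scale : NNReal.sqrt (t / s) ≠ 0 := by positivity
  ext S hS
  have h_div : Measurable fun p : ℝ × ℝ ↦ p.2 / p.1 := by fun_prop
  have h_slice : ∀ᵐ x ∂gaussianReal 0 s, gaussianReal 0 t ((· / x) ⁻¹' S) =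
      ∫⁻ y in S, gaussianPDF 0 (t / .mk (x ^ 2) (sq_nonneg x)) y := by
    filter_upwards [Measure.ae_ne (gaussianReal 0 s) 0] with x hx
    have h_var : t / .mk (x ^ 2) (sq_nonneg x) ≠ 0 :=
      div_ne_zero ht (NNReal.coe_ne_zero.mp (pow_ne_zero 2 hx))
    rw [← Measure.map_apply (by fun_prop) hS, gaussianReal_map_div_const, zero_div,
      gaussianReal_apply 0 h_var]
  calc ((gaussianReal 0 s).prod (gaussianReal 0 t)).map (fun p ↦ p.2 / p.1) S
      = ∫⁻ x, gaussianReal 0 t ((· / x) ⁻¹' S) ∂gaussianReal 0 s := by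
        rw [Measure.map_apply h_div hS, Measure.prod_apply (h_div hS)]
        rfl
    _ = ∫⁻ x, (∫⁻ y in S, gaussianPDF 0 (t / .mk (x ^ 2) (sq_nonneg x)) y) ∂gaussianReal 0 s :=
        lintegral_congr_ae h_slice
    _ = ∫⁻ y in S, (∫⁻ x, gaussianPDF 0 (t / .mk (x ^ 2) (sq_nonneg x)) y ∂gaussianReal 0 s) :=
        lintegral_lintegral_swap (by fun_prop)
    _ = cauchyMeasure 0 (NNReal.sqrt (t / s)) S := by
        simp only [lintegral_gaussianPDF_div_sq hs ht]
        rw [cauchyMeasure_of_scale_ne_zero 0 h_scale, withDensity_apply _ hS]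

lemma cauchyMeasure_Icc (x₀ : ℝ) {γ : ℝ≥0} (hγ : γ ≠ 0) {a b : ℝ} (hab : a ≤ b) :
    cauchyMeasure x₀ γ (Set.Icc a b) =
      ENNReal.ofReal (π⁻¹ * (arctan ((b - x₀) / γ) - arctan ((a - x₀) / γ))) := by
  have h_deriv (x : ℝ) :
      HasDerivAt (fun x ↦ π⁻¹ * arctan ((x - x₀) / γ)) (cauchyPDFReal x₀ γ x) x := by
    convert! ((((hasDerivAt_id x).sub_const x₀).div_const (γ : ℝ)).arctan.const_mul π⁻¹) using 1
    rw [cauchyPDFReal_def', NNReal.coe_inv, id]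
    ring
  have h_ftc := intervalIntegral.integral_eq_sub_of_hasDerivAt (fun x _ ↦ h_deriv x)
    (integrable_cauchyPDFReal x₀).intervalIntegrable (a := a) (b := b)
  rw [cauchyMeasure_of_scale_ne_zero x₀ hγ, withDensity_apply _ measurableSet_Icc]
  simp only [cauchyPDF]
  rw [← ofReal_integral_eq_lintegral_ofReal (integrable_cauchyPDFReal x₀).integrableOn
      (ae_of_all _ fun x ↦ (cauchyPDF_pos x₀ hγ x).le), integral_Icc_eq_integral_Ioc,
    ← intervalIntegral.integral_of_le hab, h_ftc, mul_sub]

lemma gaussianReal_zero_prod_abs_le_mul_abs {s t : ℝ≥0} (hs : s ≠ 0) (ht : t ≠ 0) {c : ℝ}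
    (hc : 0 ≤ c) :
    ((gaussianReal 0 s).prod (gaussianReal 0 t)) {p : ℝ × ℝ | |p.2| ≤ c * |p.1|} =
      ENNReal.ofReal (2 / π * arctan (c / √(t / s))) := by
  have := nullSingletonClass_gaussianReal (μ := 0) hs
  have h_scale : NNReal.sqrt (t / s) ≠ 0 := by positivity
  have h_fst : ∀ᵐ p ∂(gaussianReal 0 s).prod (gaussianReal 0 t), p.1 ≠ 0 :=
    Measure.quasiMeasurePreserving_fst.ae (Measure.ae_ne (gaussianReal 0 s) 0)
  have h_ratio : {p : ℝ × ℝ | |p.2| ≤ c * |p.1|} =ᵐ[(gaussianReal 0 s).prod (gaussianReal 0 t)]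
      (fun p ↦ p.2 / p.1) ⁻¹' Set.Icc (-c) c := by
    filter_upwards [h_fst] with p hp
    rw [eq_iff_iff]
    change |p.2| ≤ c * |p.1| ↔ p.2 / p.1 ∈ Set.Icc (-c) c
    rw [Set.mem_Icc, ← abs_le, abs_div, div_le_iff₀ (abs_pos.mpr hp)]
  rw [measure_congr h_ratio, ← Measure.map_apply (by fun_prop) measurableSet_Icc,
    gaussianReal_zero_prod_map_div hs ht, cauchyMeasure_Icc 0 h_scale (by linarith)]
  simp only [sub_zero, coe_sqrt, NNReal.coe_div, neg_div, arctan_neg]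
  ring_nf

/-- `g_w(v) ≥ g(v)·e^{-r²/2}` where `g(v) = (2/π) arctan √(v/(1-v))` and
`r = ‖w‖₂`. -/
theorem gCone_ge_arctan_mul_exp (v : ℝ) (hv : v ∈ Set.Icc (0 : ℝ) 1) (a b : ℝ) :
    2 / π * arctan (√(v / (1 - v))) * exp (-(a ^ 2 + b ^ 2) / 2) ≤ gCone a b v := by
  have h_symm : -{p : ℝ × ℝ | |p.2| ≤ √(v / (1 - v)) * |p.1|} =
      {p : ℝ × ℝ | |p.2| ≤ √(v / (1 - v)) * |p.1|} := by
    ext p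
    simp
  have h_shift := exp_mul_gaussianReal_zero_prod_le_of_neg_eq one_ne_zero one_ne_zero a b h_symm
  rw [gaussianReal_zero_prod_abs_le_mul_abs one_ne_zero one_ne_zero (sqrt_nonneg _),
    ← ENNReal.ofReal_mul (exp_pos _).le] at h_shift
  rw [gCone, mul_comm]
  simpa only [NNReal.coe_one, div_one, sqrt_one] using
    (ENNReal.ofReal_le_iff_le_toReal (measure_ne_top _ _)).mp h_shift

end
end

section
/- Let f = f_n be the Boolean function on inputs ω ∈ {-1,1}^{2n+1}, indexed ω(−n),...,ω(n), computed by the convolutional iterated 3-majority network with stride 1 on the graph G_n^{(1)}: layer 0 holds the input, layer t (of width 2(n−t)+1, indexed −(n−t),...,n−t) has node value f(v_{t,i}) = maj(f(v_{t−1,i−1}), f(v_{t−1,i}), f(v_{t−1,i+1})), and f(ω) is the value of the single top node v_{n,0}. Then f equals the following 'closest pair' function g: let K be the smallest positive integer i such that ω(−i) = ω(−(i−1)) or ω(i−1) = ω(i), and set g(ω) = ω(−K) in the first case and g(ω) = ω(K) in the second case (these agree if both hold); if no such i ≤ n exists, set g(ω) = ω(n). -/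
noncomputable section

/-- Majority of three Boolean values. -/
def maj (a b c : Bool) : Bool := (a && b) || (a && c) || (b && c)

/-- The value of node `v_{t,i}` in the stride-1 convolutional iterated 3-majority network
`G_n^{(1)}` with input row `ω` (indexed by `ℤ`; only positions `-n,...,n` are relevant for the
output): `tval ω 0 i = ω i` and `tval ω (t+1) i = maj` of the three children below. -/
def tval (ω : ℤ → Bool) : ℕ → ℤ → Bool
  | 0, i => ω i
  | t + 1, i => maj (tval ω t (i - 1)) (tval ω t i) (tval ω t (i + 1))

/-!
Two equal neighbours in some layer keep their common value in all later layers, while a node whose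
whole light cone `[i - t, i + t]` alternates takes the value of the input at the right end of the
cone. If `ω` alternates on `[-m, m]` and `ω (m + 1) = ω m`, then the nodes `v_{m,0}` and `v_{m,1}`
both carry the value `ω m`, so from layer `m` on the value at `0` is frozen. A pair on the left
reduces to one on the right by reflection.
-/

theorem maj_self_left (a c : Bool) : maj a a c = a := by
  revert a c; decide

theorem maj_self_right (a b : Bool) : maj a b b = b := by
  revert a b; decide

theorem maj_reverse (a b c : Bool) : maj c b a = maj a b c := by
  revert a b c; decide

theorem maj_eq_right_of_ne_of_ne {a b c : Bool} (hab : a ≠ b) (hbc : b ≠ c) : maj a b c = c := by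
  revert a b c; decide

/-- The word `ω a, ω (a + 1), …, ω b` is alternating: any two neighbours in it differ. It says that
`ω` has no pair of equal neighbours inside the integer interval `[a, b]`. -/
def AlternatesOn (ω : ℤ → Bool) (a b : ℤ) : Prop :=
  ∀ k, a ≤ k → k < b → ω k ≠ ω (k + 1)

theorem AlternatesOn.mono {ω : ℤ → Bool} {a b a' b' : ℤ} (h : AlternatesOn ω a b)
    (ha : a ≤ a') (hb : b' ≤ b) : AlternatesOn ω a' b' :=
  fun k hak hkb => h k (ha.trans hak) (hkb.trans_le hb)

theorem AlternatesOn.comp_neg {ω : ℤ → Bool} {a b : ℤ} (h : AlternatesOn ω a b) :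
    AlternatesOn (fun i => ω (-i)) (-b) (-a) := by
  intro k hbk hka
  have hne := h (-(k + 1)) (by omega) (by omega)
  rw [show -(k + 1) + 1 = -k by ring] at hne
  exact hne.symm

theorem alternatesOn_neg_self {ω : ℤ → Bool} {m : ℕ}
    (h : ∀ i : ℕ, 1 ≤ i → i ≤ m →
      ω (-(i : ℤ)) ≠ ω (-(i : ℤ) + 1) ∧ ω ((i : ℤ) - 1) ≠ ω (i : ℤ)) :
    AlternatesOn ω (-m) m := by
  intro k hmk hkm
  obtain ⟨i, rfl | rfl⟩ := k.eq_nat_or_neg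
  · simpa using (h (i + 1) (by omega) (by omega)).2
  · obtain rfl | hi := i.eq_zero_or_pos
    · simpa using (h 1 le_rfl (by omega)).2
    · exact (h i hi (by omega)).1

section Network

variable {ω : ℤ → Bool} {i : ℤ} {s t : ℕ}

theorem tval_comp_neg (ω : ℤ → Bool) (t : ℕ) (i : ℤ) :
    tval (fun j => ω (-j)) t i = tval ω t (-i) := by
  induction t generalizing i with
  | zero => rfl
  | succ t ih =>
    simp only [tval, ih]
    rw [maj_reverse, neg_sub', neg_add', sub_neg_eq_add]

theorem tval_eq_of_le_of_pair (hst : s ≤ t) (hpair : tval ω s (i + 1) = tval ω s i) :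
    tval ω t i = tval ω s i := by
  suffices tval ω t i = tval ω s i ∧ tval ω t (i + 1) = tval ω s i from this.1
  induction t, hst using Nat.le_induction with
  | base => exact ⟨rfl, hpair⟩
  | succ t _ ih =>
    obtain ⟨hleft, hright⟩ := ih
    constructor
    · rw [tval, hleft, hright, maj_self_right]
    · rw [tval, add_sub_cancel_right, hleft, hright, maj_self_left]

theorem tval_eq_of_alternatesOn (h : AlternatesOn ω (i - t) (i + t)) :
    tval ω t i = ω (i + t) := by
  induction t generalizing i with
  | zero => simp [tval]
  | succ t ih =>
    push_cast at h ⊢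
    have hleft : tval ω t (i - 1) = ω (i + t - 1) := by
      rw [ih (h.mono (by omega) (by omega)), sub_add_eq_add_sub]
    have hmid : tval ω t i = ω (i + t) := ih (h.mono (by omega) (by omega))
    have hright : tval ω t (i + 1) = ω (i + (t + 1)) := by
      rw [ih (h.mono (by omega) (by omega)), add_assoc, add_comm 1]
    rw [tval, hleft, hmid, hright]
    apply maj_eq_right_of_ne_of_ne
    · simpa using h (i + t - 1) (by omega) (by omega)
    · simpa [add_assoc] using h (i + t) (by omega) (by omega)

theorem tval_add_one_eq_of_alternatesOn_of_pair (h : AlternatesOn ω (i - t) (i + t))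
    (hpair : ω (i + t + 1) = ω (i + t)) : tval ω t (i + 1) = ω (i + t) := by
  induction t generalizing i with
  | zero => simpa [tval] using hpair
  | succ t ih =>
    have hend : i + ((t + 1 : ℕ) : ℤ) = i + 1 + t := by push_cast; ring
    rw [hend] at h hpair ⊢
    have hcone : AlternatesOn ω (i + 1 - t) (i + 1 + t) := h.mono (by omega) le_rfl
    rw [tval, tval_eq_of_alternatesOn hcone, ih hcone hpair, maj_self_right]

theorem tval_eq_of_alternatesOn_of_pair_right (hst : s ≤ t)
    (h : AlternatesOn ω (i - s) (i + s)) (hpair : ω (i + s + 1) = ω (i + s)) :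
    tval ω t i = ω (i + s + 1) := by
  have hcenter : tval ω s i = ω (i + s) := tval_eq_of_alternatesOn h
  have hnext : tval ω s (i + 1) = ω (i + s) := tval_add_one_eq_of_alternatesOn_of_pair h hpair
  rw [tval_eq_of_le_of_pair hst (hnext.trans hcenter.symm), hcenter, hpair]

theorem tval_eq_of_alternatesOn_of_pair_left (hst : s ≤ t)
    (h : AlternatesOn ω (i - s) (i + s)) (hpair : ω (i - s - 1) = ω (i - s)) :
    tval ω t i = ω (i - s - 1) := by
  have hend : -(-i + (s : ℤ)) = i - s := by ring
  have hend' : -(-i + (s : ℤ) + 1) = i - s - 1 := by ring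
  have hreflected : AlternatesOn (fun j => ω (-j)) (-i - s) (-i + s) := by
    simpa only [neg_add', neg_sub', sub_neg_eq_add] using h.comp_neg
  have hvalue := tval_eq_of_alternatesOn_of_pair_right hst hreflected
    (by simpa only [hend, hend'] using hpair)
  simpa only [tval_comp_neg, neg_neg, hend'] using hvalue

end Network

/-- closest pair lemma: the iterated 3-majority with stride 1 on `G_n^{(1)}`,
i.e. `ω ↦ tval ω n 0` on inputs `ω(-n),...,ω(n)`, equals the closest pair function:
if `K ∈ {1,...,n}` is the smallest positive integer with `ω(-K) = ω(-(K-1))` or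
`ω(K-1) = ω(K)`, the output is `ω(-K)` (resp. `ω(K)`) in the respective case, and if no such
`K ≤ n` exists the output is `ω(n)`. -/
theorem iterated_three_majority_stride_one_eq_closest_pair (n : ℕ) (ω : ℤ → Bool) :
    (∀ K : ℕ, 1 ≤ K → K ≤ n →
      (∀ i : ℕ, 1 ≤ i → i < K →
        ω (-(i : ℤ)) ≠ ω (-(i : ℤ) + 1) ∧ ω ((i : ℤ) - 1) ≠ ω (i : ℤ)) →
      ((ω (-(K : ℤ)) = ω (-(K : ℤ) + 1) → tval ω n 0 = ω (-(K : ℤ))) ∧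
        (ω ((K : ℤ) - 1) = ω (K : ℤ) → tval ω n 0 = ω (K : ℤ))))
    ∧
    ((∀ i : ℕ, 1 ≤ i → i ≤ n →
        ω (-(i : ℤ)) ≠ ω (-(i : ℤ) + 1) ∧ ω ((i : ℤ) - 1) ≠ ω (i : ℤ)) →
      tval ω n 0 = ω (n : ℤ)) := by
  refine ⟨fun K hK hKn hdiff => ?_, fun hdiff => ?_⟩
  · obtain ⟨m, rfl⟩ := Nat.exists_eq_add_of_le' hK
    have hmn : m ≤ n := by omega
    have halt : AlternatesOn ω (0 - m) (0 + m) := by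
      simpa using alternatesOn_neg_self fun i hi him => hdiff i hi (Nat.lt_succ_of_le him)
    have hleft : -((m + 1 : ℕ) : ℤ) = 0 - m - 1 := by push_cast; ring
    have hright : ((m + 1 : ℕ) : ℤ) = 0 + m + 1 := by push_cast; ring
    constructor
    · intro hpair
      rw [hleft, sub_add_cancel] at hpair
      rw [hleft, tval_eq_of_alternatesOn_of_pair_left hmn halt hpair]
    · intro hpair
      rw [hright, add_sub_cancel_right] at hpair
      rw [hright, tval_eq_of_alternatesOn_of_pair_right hmn halt hpair.symm]
  · have halt : AlternatesOn ω (0 - n) (0 + n) := by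
      simpa using alternatesOn_neg_self hdiff
    simpa using tval_eq_of_alternatesOn halt

end
end

section
/- Let G_{n,k,s} be the graph of the convolutional iterated (2k+1)-majority network with filter size 2k+1 and stride s ≥ 2: node v_{t,i} at layer t ≥ 1 has the 2k+1 children v_{t−1, s(i−1)+1}, ..., v_{t−1, s(i−1)+2k+1}. For a node u at layer t, its set of ancestors at layer t' > t consists of all nodes at layer t' from which u is reachable by descending through children. Then for every layer t and every set S of m ≤ 2k nodes at layer t that are consecutive (next to each other), the set of ancestors of S at any higher layer has cardinality at most 2k. -/
open Finset

/-- The set of parents of node `j ≥ 1` (at some layer) in the convolutional iterated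
`(2k+1)`-majority graph `G_{n,k,s}`: node `i` at the layer above is a parent of `j` iff
`j` is one of its `2k+1` children `s(i-1)+1, ..., s(i-1)+2k+1`. -/
def parents (k s j : ℕ) : Finset ℕ :=
  (Finset.range (j + 2)).filter fun i => 1 ≤ i ∧ s * (i - 1) + 1 ≤ j ∧ j ≤ s * (i - 1) + 2 * k + 1

/-- The set of parents of a set of nodes. -/
def parentSet (k s : ℕ) (S : Finset ℕ) : Finset ℕ := S.biUnion (parents k s)

/-!
The parents of `j` form an interval whose endpoints are ceiling quotients by `s`. Hence the parents
of a window of `w` consecutive nodes again lie in a window, of width roughly `(w + 2 * k) / s`, and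
width `w` suffices as soon as `w + 2 * k ≤ s * w`. Under this condition a bound by `w` propagates
through all layers; for `s ≥ 2` the condition holds with `w = 2 * k`.
-/

section

variable {k s : ℕ} {S : Finset ℕ} {a w : ℕ}

theorem mem_parents (hs : 0 < s) {i j : ℕ} :
    i ∈ parents k s j ↔ 1 ≤ i ∧ s * (i - 1) + 1 ≤ j ∧ j ≤ s * (i - 1) + 2 * k + 1 := by
  simp only [parents, mem_filter, mem_range, and_iff_right_iff_imp]
  rintro ⟨-, hij, -⟩
  have := Nat.le_mul_of_pos_left (i - 1) hs
  omega

theorem parents_eq_Ico (hs : 0 < s) (j : ℕ) :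
    parents k s j = Ico ((j - (2 * k + 1)) ⌈/⌉ s + 1) (j ⌈/⌉ s + 1) := by
  ext i
  have first_le : (j - (2 * k + 1)) ⌈/⌉ s ≤ i - 1 ↔ j - (2 * k + 1) ≤ s * (i - 1) :=
    ceilDiv_le_iff_le_mul hs
  have lt_last : i - 1 < j ⌈/⌉ s ↔ s * (i - 1) < j := (gc_mul_ceilDiv hs).lt_iff_lt
  rw [mem_parents hs, mem_Ico]
  omega

theorem parentSet_subset_Ico (hs : 0 < s) {b : ℕ} (hS : S ⊆ Ico a b) :
    parentSet k s S ⊆ Ico ((a - (2 * k + 1)) ⌈/⌉ s + 1) ((b - 1) ⌈/⌉ s + 1) := by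
  refine biUnion_subset.2 fun j hj => ?_
  obtain ⟨haj, hjb⟩ := mem_Ico.1 (hS hj)
  rw [parents_eq_Ico hs]
  have ceilDiv_mono : Monotone (· ⌈/⌉ s) := (gc_mul_ceilDiv hs).monotone_l
  gcongr
  · exact ceilDiv_mono (by omega)
  · exact ceilDiv_mono (by omega)

theorem exists_parentSet_subset_Ico (hs : 0 < s) (hw : w + 2 * k ≤ s * w)
    (hS : S ⊆ Ico a (a + w)) : ∃ b, parentSet k s S ⊆ Ico b (b + w) := by
  refine ⟨_, (parentSet_subset_Ico hs hS).trans (Ico_subset_Ico_right ?_)⟩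
  suffices (a + w - 1) ⌈/⌉ s ≤ (a - (2 * k + 1)) ⌈/⌉ s + w by omega
  rw [ceilDiv_le_iff_le_mul hs]
  calc a + w - 1 ≤ (a - (2 * k + 1)) + (w + 2 * k) := by omega
    _ ≤ s * ((a - (2 * k + 1)) ⌈/⌉ s) + s * w := add_le_add ((gc_mul_ceilDiv hs).le_u_l _) hw
    _ = s * ((a - (2 * k + 1)) ⌈/⌉ s + w) := (mul_add ..).symm

theorem exists_iterate_parentSet_subset_Ico (hs : 0 < s) (hw : w + 2 * k ≤ s * w)
    (hS : S ⊆ Ico a (a + w)) (r : ℕ) : ∃ b, (parentSet k s)^[r] S ⊆ Ico b (b + w) := by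
  induction r with
  | zero => exact ⟨a, hS⟩
  | succ r ih =>
    obtain ⟨b, hb⟩ := ih
    rw [Function.iterate_succ_apply']
    exact exists_parentSet_subset_Ico hs hw hb

theorem card_ancestors_le_two_k_general (hs : 0 < s) (hw : w + 2 * k ≤ s * w)
    (hS : S ⊆ Ico a (a + w)) (r : ℕ) : ((parentSet k s)^[r] S).card ≤ w := by
  obtain ⟨b, hb⟩ := exists_iterate_parentSet_subset_Ico hs hw hS r
  simpa using card_le_card hb

end

/-- in the convolutional iterated `(2k+1)`-majority graph with stride `s ≥ 2`,
for every set `S` of `m ≤ 2k` consecutive nodes at some layer, the set of ancestors of `S` at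
any higher layer (i.e. the `r`-fold parent set, `r ≥ 1`) has cardinality at most `2k`. -/
theorem card_ancestors_le_two_k (k s : ℕ) (hk : 1 ≤ k) (hs : 2 ≤ s)
    (u m : ℕ) (hu : 1 ≤ u) (hm1 : 1 ≤ m) (hm2 : m ≤ 2 * k) (r : ℕ) (hr : 1 ≤ r) :
    ((parentSet k s)^[r] (Finset.Icc u (u + m - 1))).card ≤ 2 * k := by
  have window : Icc u (u + m - 1) ⊆ Ico u (u + 2 * k) := by grind
  exact card_ancestors_le_two_k_general (by omega) (by nlinarith) window r
end
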